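/- Let G = (V, E) be a finite directed graph on vertices v_0, …, v_{n−1} (n ≥ 2) with weight function w : E → ℝ, and assume G contains at least one cycle. Form the graph G_H obtained from G by adding the Hamiltonian cycle edges (v_0,v_1), (v_1,v_2), …, (v_{n−2},v_{n−1}), (v_{n−1},v_0) (where edges already present keep their original weight and new edges all receive a common weight M). Then G_H is strongly connected for every choice of M, and there exists M_0 ∈ ℝ such that for all M ≥ M_0, the minimal cycle mean of G_H equals the minimal cycle mean of G. -/

import Mathlib

variable {V : Type*}

/-- A cycle of length `k + 1` in the directed graph with edge relation `E`:
the vertices are `f 0, f 1, ..., f k, f 0` with indices taken cyclically. -/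
def IsCycle (E : V → V → Prop) {k : ℕ} (f : Fin (k + 1) → V) : Prop :=
  ∀ i : Fin (k + 1), E (f i) (f (i + 1))

/-- Total weight of a cycle with respect to the weight function `w`. -/
noncomputable def cycleWeight (w : V → V → ℝ) {k : ℕ} (f : Fin (k + 1) → V) : ℝ :=
  ∑ i : Fin (k + 1), w (f i) (f (i + 1))

/-- The cycle mean: total weight divided by the length `k + 1`. -/
noncomputable def cycleMean (w : V → V → ℝ) {k : ℕ} (f : Fin (k + 1) → V) : ℝ :=
  cycleWeight w f / (k + 1 : ℝ)

/-- `mu` is the minimal cycle mean of the graph: it is attained by some cycle and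
it is a lower bound on the mean of every cycle. -/
def IsMinCycleMean (E : V → V → Prop) (w : V → V → ℝ) (mu : ℝ) : Prop :=
  (∃ (k : ℕ) (f : Fin (k + 1) → V), IsCycle E f ∧ cycleMean w f = mu) ∧
  ∀ (k : ℕ) (f : Fin (k + 1) → V), IsCycle E f → mu ≤ cycleMean w f

/-! For the weights `w - mu` the graph has no negative cycle, so it carries a feasible potential `p`
(`w a b - mu ≥ p a - p b` on edges): take `p v` to be the least weight of a simple path from `v`.
This is feasible because prepending `a` to a simple path from `b` closes at most one cycle, which
can be cut off without increasing the weight. A pair `(a, b)` that is not an edge may then be added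
with any weight `M ≥ mu + p a - p b` without losing feasibility, and `p` telescopes around each
cycle of the extended graph. The old optimal cycle is still there, so the minimum does not change.
-/

open List

variable {c w : V → V → ℝ} {E : V → V → Prop} {mu : ℝ}

section Cycles

/-- The graph `E` has no cycle of negative total weight for the edge weights `c`. -/
def NoNegativeCycle (E : V → V → Prop) (c : V → V → ℝ) : Prop :=
  ∀ (k : ℕ) (f : Fin (k + 1) → V), IsCycle E f → 0 ≤ cycleWeight c f

lemma cycleWeight_sub_const (w : V → V → ℝ) (r : ℝ) {k : ℕ} (f : Fin (k + 1) → V) :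
    cycleWeight (fun a b => w a b - r) f = cycleWeight w f - r * (k + 1) := by
  simp [cycleWeight, Finset.sum_sub_distrib, mul_comm]

lemma noNegativeCycle_sub_iff :
    NoNegativeCycle E (fun a b => w a b - mu) ↔
      ∀ (k : ℕ) (f : Fin (k + 1) → V), IsCycle E f → mu ≤ cycleMean w f := by
  refine forall₃_congr fun k f _ => ?_
  rw [cycleWeight_sub_const, sub_nonneg, cycleMean, le_div_iff₀ (by positivity)]

lemma IsCycle.cycleMean_congr {w' : V → V → ℝ} {k : ℕ} {f : Fin (k + 1) → V} (hf : IsCycle E f)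
    (hw : ∀ a b, E a b → w' a b = w a b) : cycleMean w' f = cycleMean w f := by
  rw [cycleMean, cycleMean, cycleWeight, cycleWeight,
    Finset.sum_congr rfl fun i _ => hw _ _ (hf i)]

end Cycles

section Walks

/-- The total weight of the walk visiting the listed vertices in order; it is `0` when there are
fewer than two of them. -/
def walkWeight (c : V → V → ℝ) : List V → ℝ
  | a :: b :: l => c a b + walkWeight c (b :: l)
  | _ => 0

lemma walkWeight_append_cons (c : V → V → ℝ) (a : V) (l₁ l₂ : List V) :
    walkWeight c (l₁ ++ a :: l₂) = walkWeight c (l₁ ++ [a]) + walkWeight c (a :: l₂) := by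
  induction l₁ using twoStepInduction with
  | nil => simp [walkWeight]
  | singleton x => simp [walkWeight]
  | cons_cons x y l _ ih =>
    simp only [cons_append, walkWeight] at ih ⊢
    rw [ih, add_assoc]

lemma walkWeight_ofFn (c : V → V → ℝ) {n : ℕ} (g : Fin (n + 1) → V) :
    walkWeight c (ofFn g) = ∑ i : Fin n, c (g i.castSucc) (g i.succ) := by
  induction n with
  | zero => simp [walkWeight]
  | succ n ih =>
    rw [Fin.sum_univ_succ, ofFn_succ, ofFn_succ, walkWeight]
    simpa [ofFn_succ] using ih fun i => g i.succ

lemma isChain_ofFn_succ {n : ℕ} {g : Fin (n + 1) → V} :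
    IsChain E (ofFn g) ↔ ∀ i : Fin n, E (g i.castSucc) (g i.succ) := by
  simp only [isChain_ofFn, Fin.forall_iff, Nat.add_lt_add_iff_right, Fin.castSucc_mk, Fin.succ_mk]

lemma snoc_zero_succ {k : ℕ} (f : Fin (k + 1) → V) (i : Fin (k + 1)) :
    (Fin.snoc f (f 0) : Fin (k + 2) → V) i.succ = f (i + 1) := by
  cases i using Fin.lastCases with
  | last => rw [Fin.succ_last, Fin.snoc_last, Fin.last_add_one]
  | cast i => rw [Fin.succ_castSucc, Fin.snoc_castSucc, Fin.coeSucc_eq_succ]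

lemma walkWeight_ofFn_snoc_zero (c : V → V → ℝ) {k : ℕ} (f : Fin (k + 1) → V) :
    walkWeight c (ofFn (Fin.snoc f (f 0) : Fin (k + 2) → V)) = cycleWeight c f := by
  simp only [walkWeight_ofFn, Fin.snoc_castSucc, snoc_zero_succ, cycleWeight]

lemma isChain_ofFn_snoc_zero {k : ℕ} {f : Fin (k + 1) → V} :
    IsChain E (ofFn (Fin.snoc f (f 0) : Fin (k + 2) → V)) ↔ IsCycle E f := by
  simp only [isChain_ofFn_succ, Fin.snoc_castSucc, snoc_zero_succ, IsCycle]

lemma ofFn_snoc_get_cons (a : V) (l : List V) :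
    ofFn (Fin.snoc (a :: l).get a : Fin (l.length + 2) → V) = a :: l ++ [a] := by
  rw [ofFn_succ']
  simp

lemma NoNegativeCycle.walkWeight_nonneg (hc : NoNegativeCycle E c) {a : V} {l : List V}
    (hl : IsChain E (a :: l ++ [a])) : 0 ≤ walkWeight c (a :: l ++ [a]) := by
  rw [← ofFn_snoc_get_cons] at hl ⊢
  have cycle : IsCycle E (k := l.length) (a :: l).get := isChain_ofFn_snoc_zero.1 hl
  exact (hc _ _ cycle).trans_eq (walkWeight_ofFn_snoc_zero c _).symm

end Walks

section Potentials

/-- `p` is a feasible potential for the edge weights `c` on the graph `E`, with the sign convention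
of distances to a fixed target. -/
def IsPotential (E : V → V → Prop) (c : V → V → ℝ) (p : V → ℝ) : Prop :=
  ∀ a b, E a b → p a ≤ c a b + p b

/-- The simple paths of the graph `E` starting at `v`, encoded as the list of vertices
after `v`. -/
def simplePaths (E : V → V → Prop) (v : V) : Set (List V) :=
  {l | IsChain E (v :: l) ∧ (v :: l).Nodup}

lemma nil_mem_simplePaths (E : V → V → Prop) (v : V) : [] ∈ simplePaths E v := by
  simp [simplePaths]

lemma finite_simplePaths [Finite V] (E : V → V → Prop) (v : V) : (simplePaths E v).Finite := by
  have := Fintype.ofFinite V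
  have nodup_finite : {l : List V | l.Nodup}.Finite :=
    Set.finite_coe_iff.1 (inferInstanceAs (Finite {l : List V // l.Nodup}))
  exact nodup_finite.subset fun l hl => hl.2.of_cons

lemma NoNegativeCycle.exists_simplePath_le (hc : NoNegativeCycle E c) {a b : V} (hab : E a b)
    {l : List V} (hl : l ∈ simplePaths E b) :
    ∃ l' ∈ simplePaths E a, walkWeight c (a :: l') ≤ c a b + walkWeight c (b :: l) := by
  have walk : IsChain E (a :: b :: l) := hl.1.cons_cons hab
  by_cases ha : a ∈ b :: l
  · obtain ⟨l₁, l₂, split⟩ := append_of_mem ha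
    rw [split, ← cons_append, isChain_split] at walk
    have nodup : (a :: l₂).Nodup := (split ▸ hl.2).of_append_right
    refine ⟨l₂, ⟨walk.2, nodup⟩, ?_⟩
    calc walkWeight c (a :: l₂)
        ≤ walkWeight c (a :: l₁ ++ [a]) + walkWeight c (a :: l₂) :=
          le_add_of_nonneg_left (hc.walkWeight_nonneg walk.1)
      _ = walkWeight c (a :: b :: l) := by rw [← walkWeight_append_cons, split, cons_append]
      _ = c a b + walkWeight c (b :: l) := by rw [walkWeight]
  · exact ⟨b :: l, ⟨walk, nodup_cons.2 ⟨ha, hl.2⟩⟩, by rw [walkWeight]⟩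

lemma NoNegativeCycle.exists_isPotential [Finite V] (hc : NoNegativeCycle E c) :
    ∃ p : V → ℝ, IsPotential E c p := by
  choose path path_mem path_le using fun v => (simplePaths E v).exists_min_image
    (fun l => walkWeight c (v :: l)) (finite_simplePaths E v) ⟨[], nil_mem_simplePaths E v⟩
  refine ⟨fun v => walkWeight c (v :: path v), fun a b hab => ?_⟩
  obtain ⟨l, hl, hle⟩ := hc.exists_simplePath_le hab (path_mem b)
  exact (path_le a l hl).trans hle

lemma IsPotential.noNegativeCycle {p : V → ℝ} (hp : IsPotential E c p) : NoNegativeCycle E c := by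
  intro k f hf
  have shift : ∑ i, p (f (i + 1)) = ∑ i, p (f i) :=
    Equiv.sum_comp (Equiv.addRight (1 : Fin (k + 1))) fun i => p (f i)
  have summed : ∑ i, p (f i) ≤ cycleWeight c f + ∑ i, p (f (i + 1)) := by
    rw [cycleWeight, ← Finset.sum_add_distrib]
    exact Finset.sum_le_sum fun i _ => hp _ _ (hf i)
  linarith

end Potentials

lemma IsMinCycleMean.exists_forall_extension [Finite V] (hmu : IsMinCycleMean E w mu) :
    ∃ M0 : ℝ, ∀ (E' : V → V → Prop) (w' : V → V → ℝ), (∀ a b, E a b → E' a b) →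
      (∀ a b, E a b → w' a b = w a b) → (∀ a b, E' a b → ¬E a b → M0 ≤ w' a b) →
      IsMinCycleMean E' w' mu := by
  obtain ⟨p, hp⟩ := (noNegativeCycle_sub_iff.2 hmu.2).exists_isPotential
  obtain ⟨M0, hM0⟩ := Finite.bddAbove_range fun e : V × V => mu + p e.1 - p e.2
  refine ⟨M0, fun E' w' hE hw hnew => ⟨?_, noNegativeCycle_sub_iff.1 ?_⟩⟩
  · obtain ⟨k, f, hf, hfmu⟩ := hmu.1
    exact ⟨k, f, fun i => hE _ _ (hf i), (hf.cycleMean_congr hw).trans hfmu⟩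
  · have hp' : IsPotential E' (fun a b => w' a b - mu) p := fun a b hab => by
      by_cases h : E a b
      · simpa only [hw a b h] using hp a b h
      · linarith [hM0 ⟨(a, b), rfl⟩, hnew a b hab h]
    exact hp'.noNegativeCycle

lemma transGen_add_one_zero {n : ℕ} (u : Fin (n + 1)) :
    Relation.TransGen (fun a b : Fin (n + 1) => b = a + 1) u 0 := by
  induction u using Fin.reverseInduction with
  | last => exact .single (Fin.last_add_one n).symm
  | cast i ih => exact .head Fin.coeSucc_eq_succ.symm ih

lemma transGen_add_one {n : ℕ} (u v : Fin (n + 1)) :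
    Relation.TransGen (fun a b : Fin (n + 1) => b = a + 1) u v := by
  induction v using Fin.induction with
  | zero => exact transGen_add_one_zero u
  | succ i ih => exact ih.tail Fin.coeSucc_eq_succ.symm

theorem hamiltonian_augmentation_general [Finite V] (hmu : IsMinCycleMean E w mu)
    {H : V → V → Prop} (hH : ∀ u v, u ≠ v → Relation.TransGen H u v) :
    (∀ u v, u ≠ v → Relation.TransGen (fun a b => E a b ∨ H a b) u v) ∧
    ∃ M0 : ℝ, ∀ w' : V → V → ℝ, (∀ a b, E a b → w' a b = w a b) →
      (∀ a b, H a b → ¬E a b → M0 ≤ w' a b) →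
      IsMinCycleMean (fun a b => E a b ∨ H a b) w' mu := by
  refine ⟨fun u v huv => Relation.TransGen.mono (fun _ _ => Or.inr) _ _ (hH u v huv), ?_⟩
  obtain ⟨M0, hM0⟩ := hmu.exists_forall_extension
  exact ⟨M0, fun w' hw hnew => hM0 _ w' (fun _ _ => Or.inl) hw
    fun a b hab h => hnew a b (hab.resolve_left h) h⟩

/-- Adding a Hamiltonian cycle `v_0 → v_1 → ⋯ → v_{n-1} → v_0` (new edges of
common weight `M`, existing edges keeping their weight) to a finite graph on
`n = m + 2 ≥ 2` vertices yields a strongly connected graph, and for all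
sufficiently large `M` the minimal cycle mean is unchanged. -/
theorem hamiltonian_augmentation (m : ℕ) (E : Fin (m + 2) → Fin (m + 2) → Prop)
    [DecidableRel E] (w : Fin (m + 2) → Fin (m + 2) → ℝ) (mu : ℝ)
    (hmu : IsMinCycleMean E w mu) :
    (∀ u v : Fin (m + 2), u ≠ v →
      Relation.TransGen (fun a b : Fin (m + 2) => E a b ∨ b = a + 1) u v) ∧
    (∃ M0 : ℝ, ∀ M : ℝ, M0 ≤ M →
      IsMinCycleMean (fun a b : Fin (m + 2) => E a b ∨ b = a + 1)
        (fun a b => if E a b then w a b else M) mu) := by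
  obtain ⟨connected, M0, hM0⟩ := hamiltonian_augmentation_general hmu
    (H := fun a b => b = a + 1) fun u v _ => transGen_add_one u v
  exact ⟨connected, M0, fun M hM => hM0 _ (fun _ _ h => if_pos h) fun _ _ _ h => by rwa [if_neg h]⟩
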